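/- arXiv:2211.07829 — 2 statements merged into one kernel-verified Lean document; each statement's English description precedes it below -/
import Mathlib

section
/- Let M_1, …, M_k be matroids on the same finite ground set E, let 𝓘 be their common independent sets, let w : E → ℝ≥0 be nonnegative weights, let p ∈ (0,1] and ε ∈ (0,1), and set τ = ⌈(2/(εp)) · log(2/ε)⌉. For every subset S ⊆ E fix OPTSOL(S) ∈ 𝓘 with OPTSOL(S) ⊆ S maximizing w(OPTSOL(S)). Let R, R_1, …, R_τ be independent random subsets of E, each containing every element independently with probability p, let Q_i = OPTSOL(R_i), and let Q = Q_1 ∪ … ∪ Q_τ. Then E[ max{ w(T) : T ⊆ Q ∩ R, T ∈ 𝓘 } ] ≥ ((1−ε)/(k + 1/(k+1))) · E[ w(OPTSOL(R)) ]. -/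
open Finset

noncomputable section

variable {E : Type*} [Fintype E] [DecidableEq E]

/-- Probability that an independent-inclusion random subset of `E`, in which each element `e`
is included independently with probability `π e`, is exactly the set `A`. -/
def prodWeight (π : E → ℝ) (A : Finset E) : ℝ :=
  (∏ e ∈ A, π e) * ∏ e ∈ Aᶜ, (1 - π e)

/-- Expectation of `g` under the independent-inclusion random subset with marginals `π`. -/
def expec (π : E → ℝ) (g : Finset E → ℝ) : ℝ :=
  ∑ A : Finset E, prodWeight π A * g A

/-- Total (additive) weight of a finite set. -/
def setWeight (w : E → ℝ) (T : Finset E) : ℝ := ∑ e ∈ T, w e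

/-- Value of a best feasible (w.r.t. `𝓘`) subset of `S`, for the objective `f`. -/
def bestVal (𝓘 : Set (Finset E)) (f : Finset E → ℝ) (S : Finset E) : ℝ :=
  sSup (f '' {T | T ⊆ S ∧ T ∈ 𝓘})

/-- A (finite) matroid on the ground set `E`, given by its independent sets. -/
structure FinMatroid (E : Type*) [Fintype E] [DecidableEq E] where
  Indep : Finset E → Prop
  empty_indep : Indep ∅
  indep_subset : ∀ ⦃S T : Finset E⦄, Indep T → S ⊆ T → Indep S
  indep_exchange : ∀ ⦃S T : Finset E⦄, Indep S → Indep T → S.card < T.card →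
    ∃ e ∈ T, e ∉ S ∧ Indep (insert e S)

/-- The rank function of a matroid: the maximum cardinality of an independent subset of `S`. -/
def FinMatroid.rank (M : FinMatroid E) (S : Finset E) : ℕ :=
  sSup {n | ∃ T ⊆ S, M.Indep T ∧ T.card = n}

/-- `I_1 ∪ ⋯ ∪ I_j` (sets are indexed starting from `1`). -/
def prefixUnion (I : ℕ → Finset E) (j : ℕ) : Finset E :=
  (Finset.Icc 1 j).biUnion I

/-- A nested system of spanning sets for the set system on ground set `G` with rank
function `rk`: each `I_j` lies outside `I_{1:j-1}` and is spanning (full rank) in the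
deletion minor obtained by removing `I_{1:j-1}` from `G`. -/
def IsNSS (rk : Finset E → ℕ) (G : Finset E) (τ : ℕ) (I : ℕ → Finset E) : Prop :=
  ∀ j ∈ Finset.Icc 1 τ,
    I j ⊆ G \ prefixUnion I (j - 1) ∧ rk (I j) = rk (G \ prefixUnion I (j - 1))

/-- `I` is a maximum-`w`-weight independent set of the restriction of `M` to `G`. -/
def IsMaxWeightIndep (M : FinMatroid E) (w : E → ℝ) (G : Finset E) (I : Finset E) : Prop :=
  I ⊆ G ∧ M.Indep I ∧ ∀ J ⊆ G, M.Indep J → setWeight w J ≤ setWeight w I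

/-- `I` is a maximum-`w`-weight base of the restriction (deletion minor) of `M` to `G`. -/
def IsMaxWeightBase (M : FinMatroid E) (w : E → ℝ) (G : Finset E) (I : Finset E) : Prop :=
  I ⊆ G ∧ M.Indep I ∧ M.rank I = M.rank G ∧
    ∀ J ⊆ G, M.Indep J → M.rank J = M.rank G → setWeight w J ≤ setWeight w I

theorem FinMatroid.augment (M : FinMatroid E) : ∀ (n : ℕ) (I J : Finset E), M.Indep I → M.Indep J →
    J.card = I.card + n → ∃ K, I ⊆ K ∧ K ⊆ I ∪ J ∧ M.Indep K ∧ K.card = J.card := by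
  intro n
  induction n with
  | zero =>
    intro I J hI hJ h
    exact ⟨I, Subset.refl _, subset_union_left, hI, by omega⟩
  | succ n ih =>
    intro I J hI hJ h
    obtain ⟨e, heJ, heI, hi⟩ := M.indep_exchange hI hJ (by omega)
    obtain ⟨K, h1, h2, h3, h4⟩ := ih (insert e I) J hi hJ (by rw [card_insert_of_notMem heI]; omega)
    refine ⟨K, (subset_insert _ _).trans h1, h2.trans ?_, h3, h4⟩
    intro x hx
    simp only [mem_union, mem_insert] at hx ⊢
    grind

theorem FinMatroid.augment' (M : FinMatroid E) {I J : Finset E} (hI : M.Indep I) (hJ : M.Indep J)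
    (h : I.card ≤ J.card) : ∃ K, I ⊆ K ∧ K ⊆ I ∪ J ∧ M.Indep K ∧ K.card = J.card :=
  M.augment (J.card - I.card) I J hI hJ (by omega)

theorem FinMatroid.key (M : FinMatroid E) {Z C I : Finset E} {e : E} (hZ : Z ⊆ I)
    (hI : M.Indep (insert e I)) (heI : e ∉ I) (hC : M.Indep (Z ∪ C))
    (hd : ¬ M.Indep (insert e (Z ∪ C))) : ∃ c ∈ C, c ∉ I ∧ M.Indep (insert c I) := by
  by_contra hcon
  push Not at hcon
  have hII : M.Indep I := M.indep_subset hI (subset_insert _ _)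
  have hle : ∀ J, M.Indep J → J ⊆ I ∪ C → J.card ≤ I.card := by
    intro J hJ hJs
    by_contra hlt
    obtain ⟨c, hcJ, hcI, hc⟩ := M.indep_exchange hII hJ (by omega)
    have := hJs hcJ
    rw [mem_union] at this
    exact hcon c (this.resolve_left hcI) hcI hc
  obtain ⟨B, h1, h2, h3, h4⟩ := M.augment' hC hII
    (hle _ hC (union_subset_union_left hZ))
  have hBs : B ⊆ I ∪ C := h2.trans (by
    intro x hx
    simp only [mem_union] at hx ⊢
    have := @hZ x
    tauto)
  obtain ⟨f, hf, hfB, hfi⟩ := M.indep_exchange h3 hI (by rw [card_insert_of_notMem heI]; omega)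
  rcases mem_insert.1 hf with rfl | hf
  · exact hd (M.indep_subset hfi (insert_subset_insert _ h1))
  · have := hle _ hfi (insert_subset (mem_union_left _ hf) hBs)
    rw [card_insert_of_notMem hfB] at this
    omega

theorem FinMatroid.modExch (M : FinMatroid E) (w : E → ℝ) (hw : ∀ e, 0 ≤ w e) (U : Finset E) :
    ∀ Z G : Finset E, M.Indep (Z ∪ G) → M.Indep (Z ∪ U) → Disjoint Z G → Disjoint U (Z ∪ G) →
    ∃ d : E → ℝ, (∀ e, 0 ≤ d e) ∧ ∑ e ∈ U, d e ≤ ∑ e ∈ G, w e ∧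
      ∀ X ⊆ U, ∃ G' ⊆ G, M.Indep (Z ∪ X ∪ G') ∧
        ∑ e ∈ G, w e - ∑ e ∈ G', w e ≤ ∑ e ∈ X, d e := by
  classical
  induction U using Finset.induction_on with
  | empty =>
    intro Z G hG hU hZG hUG
    refine ⟨fun _ => 0, fun _ => le_rfl, ?_, ?_⟩
    · simpa using sum_nonneg fun e _ => hw e
    · intro X hX
      refine ⟨G, Subset.refl _, ?_, by simp⟩
      rw [subset_empty.1 hX]
      simpa using hG
  | insert e U heU ih =>
    intro Z G hG hU hZG hUG
    rw [disjoint_left] at hUG hZG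
    have heZG : e ∉ Z ∪ G := hUG (mem_insert_self _ _)
    rw [mem_union, not_or] at heZG
    have hU' : M.Indep (insert e Z ∪ U) := by
      rw [insert_union, ← union_insert]; exact hU
    by_cases hc : M.Indep (insert e (Z ∪ G))
    · obtain ⟨d, hd0, hd1, hd2⟩ := ih (insert e Z) G (by rwa [insert_union]) hU'
        (by rw [disjoint_left]; intro x hx; rcases mem_insert.1 hx with rfl | hx
            · exact heZG.2
            · exact hZG hx)
        (by rw [disjoint_left]; intro x hx; have := hUG (mem_insert_of_mem hx)
            rw [insert_union, mem_insert, not_or]; exact ⟨by rintro rfl; exact heU hx, this⟩)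
      refine ⟨fun x => if x = e then 0 else d x, ?_, ?_, ?_⟩
      · intro x; dsimp only; split_ifs <;> simp [hd0]
      · rw [sum_insert heU, if_pos rfl, zero_add]
        refine le_trans (le_of_eq (sum_congr rfl ?_)) hd1
        intro x hx
        rw [if_neg]; rintro rfl; exact heU hx
      · intro X hX
        obtain ⟨G', hG', hi, hs⟩ := hd2 (X.erase e) (by
          intro x hx; rw [mem_erase] at hx
          exact (mem_insert.1 (hX hx.2)).resolve_left hx.1)
        refine ⟨G', hG', M.indep_subset hi ?_, hs.trans ?_⟩
        · intro x; simp only [mem_union, mem_insert, mem_erase]; tauto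
        · rw [← sum_subset (erase_subset e X)]
          · refine le_of_eq (sum_congr rfl ?_)
            intro x hx
            rw [if_neg (mem_erase.1 hx).1]
          · intro x hx hx'
            rw [mem_erase] at hx'
            rw [if_pos]; tauto
    · set C := G.filter (fun c => M.Indep (insert e (Z ∪ G.erase c))) with hCdef
      have hCG : C ⊆ G := filter_subset _ _
      have heZ : M.Indep (insert e Z) := M.indep_subset hU' subset_union_left
      have hCdep : ¬ M.Indep (insert e (Z ∪ C)) := by
        intro hi
        have hcard : (insert e (Z ∪ C)).card ≤ (Z ∪ G).card := by
          by_contra hlt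
          obtain ⟨f, hf, hfn, hfi⟩ := M.indep_exchange hG hi (by omega)
          rcases mem_insert.1 hf with rfl | hf
          · exact hc hfi
          · exact hfn (union_subset_union_right hCG hf)
        obtain ⟨K, h1, h2, h3, h4⟩ := M.augment' hi hG hcard
        have hKs : K ⊆ insert e (Z ∪ G) := h2.trans (by
          intro x; have := @hCG x; simp only [mem_union, mem_insert]; tauto)
        have hcd : (insert e (Z ∪ G)).card = (Z ∪ G).card + 1 :=
          card_insert_of_notMem (by simp [heZG])
        obtain ⟨c, hcm, hcK⟩ := exists_of_ssubset (ssubset_of_subset_of_ne hKs (by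
          intro h; rw [h] at h4; omega))
        have hcn : c ∉ insert e (Z ∪ C) := fun h => hcK (h1 h)
        simp only [mem_insert, mem_union, not_or] at hcn hcm
        have hcG : c ∈ G := by tauto
        have hKe : K = (insert e (Z ∪ G)).erase c := by
          apply eq_of_subset_of_card_le
          · intro x hx; rw [mem_erase]; exact ⟨by rintro rfl; exact hcK hx, hKs hx⟩
          · rw [card_erase_of_mem (by simp [hcG])]; omega
        apply hcn.2.2
        rw [hCdef, mem_filter]
        refine ⟨hcG, M.indep_subset h3 ?_⟩
        rw [hKe]
        intro x
        simp only [mem_insert, mem_union, mem_erase]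
        rintro (rfl | h | h)
        · exact ⟨fun h => hcn.1 h.symm, Or.inl rfl⟩
        · exact ⟨by rintro rfl; exact hcn.2.1 h, by tauto⟩
        · tauto
      have hCne : C.Nonempty := by
        rw [nonempty_iff_ne_empty]; intro h
        apply hCdep; rw [h, union_empty]; exact heZ
      obtain ⟨c0, hc0, hmin⟩ := exists_min_image C w hCne
      have hc0' := (mem_filter.1 hc0)
      obtain ⟨d, hd0, hd1, hd2⟩ := ih (insert e Z) (G.erase c0) (by rw [insert_union]; exact hc0'.2) hU'
        (by rw [disjoint_left]; intro x hx hx'; rw [mem_erase] at hx'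
            rcases mem_insert.1 hx with rfl | hx
            · exact heZG.2 hx'.2
            · exact hZG hx hx'.2)
        (by rw [disjoint_left]; intro x hx hx'; have := hUG (mem_insert_of_mem hx)
            simp only [mem_union, mem_insert, mem_erase] at hx' this
            rcases hx' with (rfl | h) | h
            · exact heU hx
            · tauto
            · tauto)
      have hwG : ∑ x ∈ G, w x = ∑ x ∈ G.erase c0, w x + w c0 := (sum_erase_add _ _ hc0'.1).symm
      refine ⟨fun x => if x = e then w c0 else d x, ?_, ?_, ?_⟩
      · intro x; dsimp only; split_ifs <;> simp [hd0, hw]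
      · rw [sum_insert heU, if_pos rfl, hwG, add_comm]
        gcongr
        refine le_trans (le_of_eq (sum_congr rfl ?_)) hd1
        intro x hx
        rw [if_neg]; rintro rfl; exact heU hx
      · intro X hX
        obtain ⟨G', hG', hi, hs⟩ := hd2 (X.erase e) (by
          intro x hx; rw [mem_erase] at hx
          exact (mem_insert.1 (hX hx.2)).resolve_left hx.1)
        have hse : ∑ x ∈ X.erase e, (if x = e then w c0 else d x) = ∑ x ∈ X.erase e, d x :=
          sum_congr rfl fun x hx => by rw [if_neg (mem_erase.1 hx).1]
        by_cases heX : e ∈ X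
        · refine ⟨G', hG'.trans (erase_subset _ _), M.indep_subset hi ?_, ?_⟩
          · intro x; simp only [mem_union, mem_insert, mem_erase]; tauto
          · rw [← sum_erase_add _ _ heX, if_pos rfl, hse]
            linarith
        · rw [erase_eq_of_notMem heX] at hi hs hse
          have heG' : e ∉ G' := fun h => heZG.2 (mem_of_mem_erase (hG' h))
          obtain ⟨c, hcC, hcI, hci⟩ := M.key (Z := Z) (C := C) (I := Z ∪ X ∪ G') (e := e)
            (by intro x; simp only [mem_union]; tauto)
            (M.indep_subset hi (by intro x; simp only [mem_union, mem_insert]; tauto))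
            (by simp only [mem_union]; tauto)
            (M.indep_subset hG (union_subset_union_right hCG)) hCdep
          have hcG' : c ∉ G' := fun h => hcI (mem_union_right _ h)
          refine ⟨insert c G', insert_subset (hCG hcC) (hG'.trans (erase_subset _ _)), ?_, ?_⟩
          · rwa [union_insert]
          · rw [sum_insert hcG', hse]
            have := hmin c hcC
            linarith

theorem matExch {k : ℕ} (M : Fin k → FinMatroid E) (w : E → ℝ) (hw : ∀ e, 0 ≤ w e)
    (U G : Finset E) (hU : ∀ l, (M l).Indep U) (hG : ∀ l, (M l).Indep G) (hUG : Disjoint U G) :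
    ∃ d : E → ℝ, (∀ e, 0 ≤ d e) ∧ ∑ e ∈ U, d e ≤ k * ∑ e ∈ G, w e ∧
      ∀ X ⊆ U, ∃ T ⊆ X ∪ G, (∀ l, (M l).Indep T) ∧
        ∑ e ∈ G, w e + ∑ e ∈ X, (w e - d e) ≤ ∑ e ∈ T, w e := by
  have h := fun l => (M l).modExch w hw U ∅ G (by simpa using hG l) (by simpa using hU l)
    (by simp) (by simpa using hUG)
  choose d hd0 hd1 hd2 using h
  refine ⟨fun e => ∑ l, d l e, fun e => sum_nonneg fun l _ => hd0 l e, ?_, ?_⟩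
  · rw [sum_comm]
    calc ∑ l, ∑ e ∈ U, d l e ≤ ∑ l : Fin k, ∑ e ∈ G, w e := sum_le_sum fun l _ => hd1 l
      _ = _ := by simp
  · intro X hX
    choose G' hG' hi hs using fun l => hd2 l X hX
    set D := G.filter (fun x => ∀ l, x ∈ G' l) with hD
    have hDG : D ⊆ G := filter_subset _ _
    have hXD : Disjoint X D := disjoint_of_subset_left hX (disjoint_of_subset_right hDG hUG)
    refine ⟨X ∪ D, union_subset_union_right hDG, fun l => (M l).indep_subset (hi l) ?_, ?_⟩
    · intro x
      simp only [mem_union, hD, mem_filter]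
      rintro (h | h)
      · simp [h]
      · exact Or.inr (h.2 l)
    · rw [sum_union hXD, sum_sub_distrib]
      have h1 : ∑ e ∈ G, w e - ∑ e ∈ D, w e = ∑ e ∈ G \ D, w e := by
        rw [← sum_sdiff hDG]; ring
      have h2 : ∑ e ∈ G \ D, w e ≤ ∑ l, ∑ e ∈ G \ G' l, w e := by
        simp only [sdiff_eq_filter, sum_filter]
        rw [sum_comm]
        refine sum_le_sum fun x hx => ?_
        have hnn : ∀ l ∈ (univ : Finset (Fin k)), 0 ≤ (if x ∉ G' l then w x else 0) := by
          intro l _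
          by_cases hl : x ∈ G' l <;> simp [hl, hw]
        by_cases h : x ∈ D
        · simpa [h] using sum_nonneg hnn
        · have : ∃ l, x ∉ G' l := by
            by_contra hcon
            push Not at hcon
            exact h (mem_filter.2 ⟨hx, hcon⟩)
          obtain ⟨l, hl⟩ := this
          have := single_le_sum hnn (mem_univ l)
          simpa [hl, h] using this
      have h3 : ∀ l, ∑ e ∈ G \ G' l, w e ≤ ∑ e ∈ X, d l e := fun l => by
        have := sum_sdiff (f := w) (hG' l)
        have := hs l
        linarith
      have h4 : ∑ l, ∑ e ∈ G \ G' l, w e ≤ ∑ e ∈ X, ∑ l, d l e := by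
        rw [sum_comm (s := X)]
        exact sum_le_sum fun l _ => h3 l
      linarith

theorem pw_eq (p : ℝ) (A : Finset E) :
    prodWeight (fun _ => p) A = ∏ e, (if e ∈ A then p else 1 - p) := by
  rw [prodWeight, ← prod_mul_prod_compl A]
  congr 1
  · exact prod_congr rfl fun e he => by rw [if_pos he]
  · exact prod_congr rfl fun e he => by rw [if_neg (mem_compl.1 he)]

theorem pw_nonneg {p : ℝ} (h0 : 0 ≤ p) (h1 : p ≤ 1) (A : Finset E) :
    0 ≤ prodWeight (fun _ => p) A := by
  rw [pw_eq]
  exact prod_nonneg fun e _ => by split_ifs <;> linarith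

theorem pw_sum (p : ℝ) : ∑ A : Finset E, prodWeight (fun _ => p) A = 1 := by
  have := Fintype.prod_add (ι := E) (fun _ => p) (fun _ => 1 - p)
  simp only [prodWeight]
  rw [← this]; simp

theorem expec_const (p c : ℝ) : expec (E := E) (fun _ => p) (fun _ => c) = c := by
  rw [expec, ← sum_mul, pw_sum, one_mul]

theorem expec_add (p : ℝ) (f g : Finset E → ℝ) :
    expec (fun _ => p) (fun A => f A + g A) = expec (fun _ => p) f + expec (fun _ => p) g := by
  simp only [expec, mul_add, sum_add_distrib]

theorem expec_smul (p c : ℝ) (f : Finset E → ℝ) :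
    expec (fun _ => p) (fun A => c * f A) = c * expec (fun _ => p) f := by
  simp only [expec, mul_sum]
  exact sum_congr rfl fun A _ => by ring

theorem expec_sub (p : ℝ) (f g : Finset E → ℝ) :
    expec (fun _ => p) (fun A => f A - g A) = expec (fun _ => p) f - expec (fun _ => p) g := by
  simp only [expec, mul_sub, sum_sub_distrib]

theorem expec_sum {ι : Type*} (p : ℝ) (s : Finset ι) (f : ι → Finset E → ℝ) :
    expec (fun _ => p) (fun A => ∑ i ∈ s, f i A) = ∑ i ∈ s, expec (fun _ => p) (f i) := by
  simp only [expec, mul_sum]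
  rw [sum_comm]

theorem expec_mono {p : ℝ} (h0 : 0 ≤ p) (h1 : p ≤ 1) {f g : Finset E → ℝ} (h : ∀ A, f A ≤ g A) :
    expec (fun _ => p) f ≤ expec (fun _ => p) g :=
  sum_le_sum fun A _ => mul_le_mul_of_nonneg_left (h A) (pw_nonneg h0 h1 A)

theorem expec_comm (p : ℝ) (f : Finset E → Finset E → ℝ) :
    expec (fun _ => p) (fun A => expec (fun _ => p) (fun B => f A B)) =
      expec (fun _ => p) (fun B => expec (fun _ => p) (fun A => f A B)) := by
  simp only [expec, mul_sum]
  rw [sum_comm]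
  exact sum_congr rfl fun A _ => sum_congr rfl fun B _ => by ring

theorem expec_mem (p : ℝ) (e : E) :
    expec (fun _ => p) (fun A => if e ∈ A then 1 else 0) = p := by
  have h := Fintype.prod_add (ι := E) (fun _ => p) (fun x => if x = e then 0 else 1 - p)
  have h2 : ∀ x : E, p + (if x = e then 0 else 1 - p) = if x = e then p else 1 := by
    intro x; split_ifs <;> ring
  simp only [h2, prod_ite_eq', mem_univ, if_true] at h
  refine Eq.trans (sum_congr rfl fun A _ => ?_) h.symm
  rw [prodWeight]; dsimp only
  by_cases he : e ∈ A
  · rw [if_pos he, mul_one]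
    congr 1
    refine prod_congr rfl fun x hx => ?_
    rw [if_neg]; rintro rfl; exact (mem_compl.1 hx) he
  · rw [if_neg he, mul_zero, prod_eq_zero (i := e) (s := Aᶜ) (mem_compl.2 he) (by simp), mul_zero]

def swapSet (Y A B : Finset E) : Finset E := (A ∩ Y) ∪ (B \ Y)

theorem mem_swapSet (Y A B : Finset E) (e : E) :
    e ∈ swapSet Y A B ↔ (if e ∈ Y then e ∈ A else e ∈ B) := by
  rw [swapSet, mem_union, mem_inter, mem_sdiff]
  split_ifs <;> tauto

theorem swapSet_swapSet (Y A B : Finset E) :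
    swapSet Y (swapSet Y A B) (swapSet Y B A) = A := by
  ext e
  rw [mem_swapSet, mem_swapSet, mem_swapSet]
  split_ifs <;> tauto

def swapPerm (Y : Finset E) : Equiv.Perm (Finset E × Finset E) :=
  Function.Involutive.toPerm (fun q => (swapSet Y q.1 q.2, swapSet Y q.2 q.1)) (by
    intro q
    simp only [swapSet_swapSet])

theorem pw_swap (p : ℝ) (Y A B : Finset E) :
    prodWeight (fun _ => p) (swapSet Y A B) * prodWeight (fun _ => p) (swapSet Y B A) =
      prodWeight (fun _ => p) A * prodWeight (fun _ => p) B := by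
  simp only [pw_eq, ← prod_mul_distrib]
  refine prod_congr rfl fun e _ => ?_
  simp only [mem_swapSet]
  split_ifs <;> ring

theorem expec_swap (p : ℝ) (Y : Finset E) (f : Finset E → Finset E → ℝ) :
    expec (fun _ => p) (fun A => expec (fun _ => p) (fun B => f A B)) =
      expec (fun _ => p) (fun A => expec (fun _ => p) (fun B =>
        f (swapSet Y A B) (swapSet Y B A))) := by
  have h : ∀ g : Finset E → Finset E → ℝ,
      expec (fun _ => p) (fun A => expec (fun _ => p) (fun B => g A B)) =
      ∑ q : Finset E × Finset E,
        prodWeight (fun _ => p) q.1 * prodWeight (fun _ => p) q.2 * g q.1 q.2 := by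
    intro g
    rw [Fintype.sum_prod_type]
    simp only [expec, mul_sum]
    exact sum_congr rfl fun A _ => sum_congr rfl fun B _ => by ring
  rw [h, h, ← Equiv.sum_comp (swapPerm Y)]
  refine sum_congr rfl fun q _ => ?_
  change prodWeight (fun _ => p) (swapSet Y q.1 q.2) * prodWeight (fun _ => p) (swapSet Y q.2 q.1) *
    f (swapSet Y q.1 q.2) (swapSet Y q.2 q.1) = _
  rw [pw_swap]

theorem expec_indep (p : ℝ) (Y : Finset E) (e : E) (he : e ∉ Y) (g : Finset E → ℝ) :
    expec (fun _ => p) (fun A => (if e ∈ A then 1 else 0) * g (Y ∩ A)) =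
      p * expec (fun _ => p) (fun A => g (Y ∩ A)) := by
  have h := expec_swap p Y (fun A B => g (Y ∩ A) * (if e ∈ B then 1 else 0))
  simp only [expec_smul, expec_mem, mem_swapSet, if_neg he] at h
  have h2 : ∀ A B, Y ∩ swapSet Y A B = Y ∩ A := by
    intro A B; ext x; rw [mem_inter, mem_inter, mem_swapSet]; split_ifs <;> tauto
  simp only [h2, expec_const] at h
  rw [← expec_smul]
  refine Eq.trans ?_ (h.symm.trans ?_)
  · congr 1; ext A; ring
  · congr 1; ext A; ring

/-- One step of the sampling process. -/
def Kop (p : ℝ) (O : Finset E → Finset E) : Module.End ℝ (Finset E → ℝ) where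
  toFun φ := fun Q => expec (fun _ => p) (fun R => φ (Q ∪ O R))
  map_add' f g := by ext Q; exact expec_add p _ _
  map_smul' c f := by ext Q; exact expec_smul p c _

theorem Kop_apply (p : ℝ) (O : Finset E → Finset E) (φ : Finset E → ℝ) (Q : Finset E) :
    Kop p O φ Q = expec (fun _ => p) (fun R => φ (Q ∪ O R)) := rfl

theorem Kop_pow_sum (p : ℝ) (O : Finset E → Finset E) (φ : Finset E → ℝ) (n : ℕ) :
    ∀ Q, ∑ Rs : Fin n → Finset E, (∏ i, prodWeight (fun _ => p) (Rs i)) *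
        φ (Q ∪ univ.biUnion fun i => O (Rs i)) = (Kop p O ^ n) φ Q := by
  induction n with
  | zero => intro Q; simp
  | succ n ih =>
    intro Q
    rw [pow_succ', Module.End.mul_apply, Kop_apply, expec]
    rw [← Equiv.sum_comp (Fin.consEquiv (fun _ => Finset E)), Fintype.sum_prod_type]
    refine sum_congr rfl fun A _ => ?_
    rw [← ih, mul_sum]
    refine sum_congr rfl fun Rs _ => ?_
    rw [Fin.prod_univ_succ, mul_assoc]
    congr 2
    congr 1
    ext x
    simp [Fin.exists_fin_succ]

theorem Kop_pow_ge {p : ℝ} (h0 : 0 ≤ p) (h1 : p ≤ 1) (O : Finset E → Finset E)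
    (φ : Finset E → ℝ) (c : ℝ) (n : ℕ) :
    ∀ Q, (∀ Q', Q ⊆ Q' → c ≤ φ Q') → c ≤ (Kop p O ^ n) φ Q := by
  induction n with
  | zero => intro Q h; simpa using h Q (Subset.refl _)
  | succ n ih =>
    intro Q h
    rw [pow_succ', Module.End.mul_apply, Kop_apply]
    rw [← expec_const (E := E) p c]
    exact expec_mono h0 h1 fun A => ih _ fun Q' hQ' => h Q' (subset_union_left.trans hQ')

theorem Kop_pow_mono {p : ℝ} (h0 : 0 ≤ p) (h1 : p ≤ 1) (O : Finset E → Finset E)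
    (φ ψ : Finset E → ℝ) (n : ℕ) (h : ∀ Q, φ Q ≤ ψ Q) :
    ∀ Q, (Kop p O ^ n) φ Q ≤ (Kop p O ^ n) ψ Q := by
  induction n with
  | zero => intro Q; simpa using h Q
  | succ n ih =>
    intro Q
    rw [pow_succ', Module.End.mul_apply, Module.End.mul_apply, Kop_apply, Kop_apply]
    exact expec_mono h0 h1 fun A => ih _

theorem Kop_pow_eigen (p : ℝ) (O : Finset E → Finset E) (φ : Finset E → ℝ) (c : ℝ)
    (h : Kop p O φ = c • φ) (n : ℕ) : (Kop p O ^ n) φ = c ^ n • φ := by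
  induction n with
  | zero => simp
  | succ n ih =>
    rw [pow_succ', Module.End.mul_apply, ih, map_smul, h, smul_smul, pow_succ]

/-- marginal probability of `e` in the sampled solution -/
def marg (p : ℝ) (O : Finset E → Finset E) (e : E) : ℝ :=
  expec (fun _ => p) (fun A => if e ∈ O A then 1 else 0)

/-- indicator that `e` was not collected -/
def nind (e : E) : Finset E → ℝ := fun Q => if e ∈ Q then 0 else 1

theorem Kop_nind (p : ℝ) (O : Finset E → Finset E) (e : E) :
    Kop p O (nind e) = (1 - marg p O e) • nind e := by
  ext Q
  rw [Kop_apply, Pi.smul_apply, smul_eq_mul, marg, mul_comm]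
  rw [show (1:ℝ) - _ = expec (E := E) (fun _ => p) (fun _ => 1) - _ from by rw [expec_const], ← expec_sub, ← expec_smul]
  congr 1; ext A
  simp only [nind, mem_union]
  by_cases h1 : e ∈ Q <;> by_cases h2 : e ∈ O A <;> simp [h1, h2]

theorem Kop_const (p : ℝ) (O : Finset E → Finset E) (c : ℝ) (n : ℕ) :
    (Kop p O ^ n) (fun _ => c) = fun _ => c := by
  have := Kop_pow_eigen p O (fun _ => c) 1 (by ext Q; rw [Kop_apply, expec_const]; simp) n
  simpa using this

theorem expec_optsum (p : ℝ) (O : Finset E → Finset E) (w : E → ℝ) (S : Finset E) :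
    expec (fun _ => p) (fun A => ∑ e ∈ O A ∩ S, w e) = ∑ e ∈ S, marg p O e * w e := by
  have : ∀ A, ∑ e ∈ O A ∩ S, w e = ∑ e ∈ S, w e * (if e ∈ O A then 1 else 0) := by
    intro A
    rw [inter_comm, ← filter_mem_eq_inter, sum_filter]
    exact sum_congr rfl fun e _ => by split_ifs <;> simp
  simp only [this, expec_sum, expec_smul]
  exact sum_congr rfl fun e _ => by rw [marg, mul_comm]

/-- best expected value inside `Q` -/
def Fval (p : ℝ) (w : E → ℝ) (O : Finset E → Finset E) (L Q : Finset E) : ℝ :=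
  expec (fun _ => p) (fun A => ∑ e ∈ O (Q ∩ L ∩ A), w e)

theorem perQ {k : ℕ} (M : Fin k → FinMatroid E) (w : E → ℝ) (hw : ∀ e, 0 ≤ w e)
    (p : ℝ) (hp0 : 0 < p) (hp1 : p ≤ 1) (O : Finset E → Finset E)
    (hOmem : ∀ S, ∀ l, (M l).Indep (O S)) (hOsub : ∀ S, O S ⊆ S)
    (hOmax : ∀ S, ∀ T ⊆ S, (∀ l, (M l).Indep T) → ∑ e ∈ T, w e ≤ ∑ e ∈ O S, w e)
    (L Q Q' : Finset E) (hQ : Q ⊆ Q') :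
    ∑ e ∈ Q' \ L, marg p O e * w e + ∑ e ∈ L \ Q, marg p O e * w e ≤
      Fval p w O univ Q' + (k - 1) * Fval p w O L Q
        + (Kop p O (Fval p w O L) Q - Fval p w O L Q) / p := by
  have hd := fun B A' => matExch M w hw (O A' \ (Q ∩ L)) (O (Q ∩ L ∩ B))
    (fun l => (M l).indep_subset (hOmem A' l) sdiff_subset) (fun l => hOmem _ l)
    (disjoint_of_subset_right ((hOsub _).trans inter_subset_left) sdiff_disjoint)
  -- make the dependence only through `Q ∩ L ∩ B`
  have hd' : ∃ d : Finset E → Finset E → E → ℝ, ∀ B A',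
      (∀ e, 0 ≤ d (Q ∩ L ∩ B) A' e) ∧
      ∑ e ∈ O A' \ (Q ∩ L), d (Q ∩ L ∩ B) A' e ≤ k * ∑ e ∈ O (Q ∩ L ∩ B), w e ∧
      ∀ X ⊆ O A' \ (Q ∩ L), ∃ T ⊆ X ∪ O (Q ∩ L ∩ B), (∀ l, (M l).Indep T) ∧
        ∑ e ∈ O (Q ∩ L ∩ B), w e + ∑ e ∈ X, (w e - d (Q ∩ L ∩ B) A' e) ≤ ∑ e ∈ T, w e := by
    choose d h1 h2 h3 using hd
    refine ⟨d, fun B A' => ?_⟩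
    have hB : Q ∩ L ∩ (Q ∩ L ∩ B) = Q ∩ L ∩ B := by
      ext x; simp only [mem_inter]; tauto
    have := And.intro (h1 (Q ∩ L ∩ B) A') (And.intro (h2 (Q ∩ L ∩ B) A') (h3 (Q ∩ L ∩ B) A'))
    simpa only [hB] using this
  obtain ⟨d, hd⟩ := hd'
  set Ψ : Finset E → Finset E → Finset E → ℝ := fun S A A' =>
    ∑ e ∈ O A' ∩ S, (w e - d (Q ∩ L ∩ A) A' e) with hΨ
  have hA : expec (fun _ => p) (fun A => expec (fun _ => p) (fun A' =>
      ∑ e ∈ O (Q ∩ L ∩ A), w e + Ψ (Q' \ L) A A')) ≤ Fval p w O univ Q' := by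
    have hF : Fval p w O univ Q' = expec (fun _ => p) (fun A => expec (fun _ => p) (fun A' : Finset E =>
        ∑ e ∈ O (Q' ∩ univ ∩ swapSet L A A'), w e)) := by
      rw [← expec_swap p L (fun A _ => ∑ e ∈ O (Q' ∩ univ ∩ A), w e)]
      simp only [expec_const]
      rfl
    rw [hF]
    refine expec_mono hp0.le hp1 fun A => expec_mono hp0.le hp1 fun A' => ?_
    obtain ⟨T, hT, hTi, hTs⟩ := (hd A A').2.2 (O A' ∩ (Q' \ L)) (by
      intro x; simp only [mem_inter, mem_sdiff]; tauto)
    refine hTs.trans (hOmax _ _ (hT.trans ?_) hTi)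
    intro x hx
    have h1 := @hOsub A' x
    have h2 := @hOsub (Q ∩ L ∩ A) x
    have h3 := @hQ x
    simp only [mem_union, mem_inter, mem_sdiff, mem_univ, mem_swapSet] at hx h2 ⊢
    split_ifs <;> tauto
  have hB : p * expec (fun _ => p) (fun A => expec (fun _ => p) (fun A' => Ψ (L \ Q) A A')) ≤
      Kop p O (Fval p w O L) Q - Fval p w O L Q := by
    have hlin : expec (fun _ => p) (fun A' => expec (fun _ => p) (fun A =>
        ∑ e ∈ O (Q ∩ L ∩ A), w e + ∑ e ∈ O A' ∩ (L \ Q),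
          (if e ∈ A then 1 else 0) * (w e - d (Q ∩ L ∩ A) A' e))) =
        Fval p w O L Q + p * expec (fun _ => p) (fun A => expec (fun _ => p)
          (fun A' => Ψ (L \ Q) A A')) := by
      rw [expec_comm p (fun A A' => Ψ (L \ Q) A A'), ← expec_smul]
      simp only [expec_add, expec_const]
      congr 1
      refine congrArg _ (funext fun A' => ?_)
      rw [hΨ, expec_sum, expec_sum, mul_sum]
      refine sum_congr rfl fun e he => ?_
      refine expec_indep p (Q ∩ L) e ?_ (fun S => w e - d S A' e)
      simp only [mem_inter, mem_sdiff] at he ⊢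
      tauto
    have hK : expec (fun _ => p) (fun A' => expec (fun _ => p) (fun A =>
        ∑ e ∈ O (Q ∩ L ∩ A), w e + ∑ e ∈ O A' ∩ (L \ Q),
          (if e ∈ A then 1 else 0) * (w e - d (Q ∩ L ∩ A) A' e))) ≤
        Kop p O (Fval p w O L) Q := by
      rw [Kop_apply]
      refine expec_mono hp0.le hp1 fun A' => expec_mono hp0.le hp1 fun A => ?_
      obtain ⟨T, hT, hTi, hTs⟩ := (hd A A').2.2 (O A' ∩ (L \ Q) ∩ A) (by
        intro x; simp only [mem_inter, mem_sdiff]; tauto)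
      refine le_trans (le_of_eq ?_) (hTs.trans (hOmax _ _ (hT.trans ?_) hTi))
      · congr 1
        rw [← filter_mem_eq_inter (s := O A' ∩ (L \ Q)), sum_filter]
        exact sum_congr rfl fun e _ => by split_ifs <;> simp
      · intro x hx
        have h1 := @hOsub A' x
        have h2 := @hOsub (Q ∩ L ∩ A) x
        simp only [mem_union, mem_inter, mem_sdiff] at hx h2 ⊢
        tauto
    linarith
  have hC : ∑ e ∈ Q' \ L, marg p O e * w e + ∑ e ∈ L \ Q, marg p O e * w e
      + (1 - k) * Fval p w O L Q ≤ expec (fun _ => p) (fun A => expec (fun _ => p) (fun A' =>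
      ∑ e ∈ O (Q ∩ L ∩ A), w e + Ψ (Q' \ L) A A')) +
      expec (fun _ => p) (fun A => expec (fun _ => p) (fun A' => Ψ (L \ Q) A A')) := by
    have h1 : ∑ e ∈ Q' \ L, marg p O e * w e + ∑ e ∈ L \ Q, marg p O e * w e
      + (1 - k) * Fval p w O L Q = expec (fun _ => p) (fun A => expec (fun _ => p) (fun A' =>
        ∑ e ∈ O A' ∩ (Q' \ L), w e + ∑ e ∈ O A' ∩ (L \ Q), w e +
          (1 - k) * ∑ e ∈ O (Q ∩ L ∩ A), w e)) := by
      simp only [expec_add, expec_const, expec_optsum, expec_smul]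
      rfl
    rw [h1, ← expec_add]
    refine expec_mono hp0.le hp1 fun A => ?_
    rw [← expec_add]
    refine expec_mono hp0.le hp1 fun A' => ?_
    obtain ⟨h0, h2, -⟩ := hd A A'
    simp only [hΨ, sum_sub_distrib]
    have h3 : ∑ e ∈ O A' ∩ (Q' \ L), d (Q ∩ L ∩ A) A' e + ∑ e ∈ O A' ∩ (L \ Q), d (Q ∩ L ∩ A) A' e
        ≤ ∑ e ∈ O A' \ (Q ∩ L), d (Q ∩ L ∩ A) A' e := by
      rw [← sum_union]
      · apply sum_le_sum_of_subset_of_nonneg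
        · intro x; simp only [mem_union, mem_inter, mem_sdiff]; tauto
        · intros; exact h0 _
      · rw [disjoint_left]; intro x; simp only [mem_inter, mem_sdiff]; tauto
    linarith
  have hB' := (le_div_iff₀' hp0).2 hB
  linarith

theorem agg {k : ℕ} (M : Fin k → FinMatroid E) (w : E → ℝ) (hw : ∀ e, 0 ≤ w e)
    (p : ℝ) (hp0 : 0 < p) (hp1 : p ≤ 1) (O : Finset E → Finset E)
    (hOmem : ∀ S, ∀ l, (M l).Indep (O S)) (hOsub : ∀ S, O S ⊆ S)
    (hOmax : ∀ S, ∀ T ⊆ S, (∀ l, (M l).Indep T) → ∑ e ∈ T, w e ≤ ∑ e ∈ O S, w e)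
    (L : Finset E) (j m : ℕ) :
    ∑ e ∈ Lᶜ, marg p O e * w e * (1 - (1 - marg p O e) ^ (j + m)) +
      ∑ e ∈ L, marg p O e * w e * (1 - marg p O e) ^ j ≤
      (Kop p O ^ (j + m)) (Fval p w O univ) ∅ + (k - 1) * (Kop p O ^ j) (Fval p w O L) ∅
        + ((Kop p O ^ (j + 1)) (Fval p w O L) ∅ - (Kop p O ^ j) (Fval p w O L) ∅) / p := by
  set F := Fval p w O univ with hF
  set Λ := Fval p w O L with hΛ
  set K := Kop p O with hK
  set Φ : Finset E → ℝ := F - (fun _ => ∑ e ∈ Lᶜ, marg p O e * w e) +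
    ∑ e ∈ Lᶜ, (marg p O e * w e) • nind e with hΦ
  set c : Finset E → ℝ := ∑ e ∈ L, (marg p O e * w e) • nind e - ((k : ℝ) - 1) • Λ -
    (1 / p) • (K Λ - Λ) with hc
  have h1 : ∀ Q, c Q ≤ (K ^ m) Φ Q := by
    intro Q
    refine Kop_pow_ge hp0.le hp1 O Φ (c Q) m Q fun Q' hQ => ?_
    have := perQ M w hw p hp0 hp1 O hOmem hOsub hOmax L Q Q' hQ
    simp only [hc, hΦ, Pi.add_apply, Pi.sub_apply, Finset.sum_apply, Pi.smul_apply, smul_eq_mul]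
    have e1 : ∑ e ∈ Lᶜ, marg p O e * w e - ∑ e ∈ Lᶜ, marg p O e * w e * nind e Q' =
        ∑ e ∈ Q' \ L, marg p O e * w e := by
      rw [← sum_sub_distrib]
      have : Q' \ L = Lᶜ.filter (· ∈ Q') := by
        ext x; simp only [mem_sdiff, mem_filter, mem_compl]; tauto
      rw [this, sum_filter]
      refine sum_congr rfl fun e _ => ?_
      rw [nind]; split_ifs <;> ring
    have e2 : ∑ e ∈ L, marg p O e * w e * nind e Q = ∑ e ∈ L \ Q, marg p O e * w e := by
      have : L \ Q = L.filter (· ∉ Q) := by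
        ext x; simp only [mem_sdiff, mem_filter]
      rw [this, sum_filter]
      refine sum_congr rfl fun e _ => ?_
      by_cases h : e ∈ Q <;> simp [nind, h]
    rw [e2]
    rw [← hF, ← hΛ, ← hK] at this
    have e3 : (K Λ Q - Λ Q) / p = 1 / p * (K Λ Q - Λ Q) := by ring
    linarith
  have h2 := Kop_pow_mono hp0.le hp1 O _ _ j h1 ∅
  rw [← hK, ← Module.End.mul_apply, ← pow_add] at h2
  have hn : ∀ n e, (K ^ n) (nind e) ∅ = (1 - marg p O e) ^ n := by
    intro n e
    rw [hK, Kop_pow_eigen p O _ _ (Kop_nind p O e)]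
    simp [nind]
  have hcst : ∀ n a, (K ^ n) (fun _ => a) ∅ = a := by
    intro n a; rw [hK, Kop_const]
  simp only [hc, hΦ, map_add, map_sub, map_sum, map_smul, Pi.add_apply, Pi.sub_apply,
    Finset.sum_apply, Pi.smul_apply, smul_eq_mul, hn, hcst] at h2
  rw [← Module.End.mul_apply, ← pow_succ] at h2
  simp only [mul_sub, mul_one, sum_sub_distrib]
  have e3 : ((K ^ (j + 1)) Λ ∅ - (K ^ j) Λ ∅) / p =
    1 / p * ((K ^ (j + 1)) Λ ∅) - 1 / p * ((K ^ j) Λ ∅) := by ring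
  linarith

theorem num_ge_two (k : ℕ) (hk : 2 ≤ k) (p : ℝ) (hp0 : 0 < p) (C f : ℝ) (y : ℕ → ℝ)
    (J : ℕ) (hJ : 2 * Real.log 2 ≤ p * J) (hf : 0 ≤ f) (hy : ∀ j ≤ J, y j ≤ f) (hy0 : 0 ≤ y 0)
    (main : ∀ j < J, C ≤ f + (k - 1) * y j + (y (j + 1) - y j) / p) :
    C * (k + 1) ≤ f * (k ^ 2 + k + 1) := by
  have hk' : (2 : ℝ) ≤ k := by exact_mod_cast hk
  by_cases hC : C ≤ k * f
  · nlinarith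
  push Not at hC
  have hz : ∀ j ≤ J, 0 ≤ C - f - (k - 1) * y j := by
    intro j hj
    have := mul_le_mul_of_nonneg_left (hy j hj) (show (0 : ℝ) ≤ k - 1 by linarith)
    linarith
  have hrec : ∀ j ≤ J, C - f - (k - 1) * y j ≤
      Real.exp (-((k - 1) * p * j)) * (C - f - (k - 1) * y 0) := by
    intro j
    induction j with
    | zero => intro _; simp
    | succ j ih =>
      intro hj
      have h1 := ih (by omega)
      have h2 := main j (by omega)
      have h3 : p * (C - f - (k - 1) * y j) ≤ y (j + 1) - y j := by
        rw [← le_div_iff₀' hp0]; linarith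
      have h4 := mul_le_mul_of_nonneg_left h3 (show (0 : ℝ) ≤ k - 1 by linarith)
      have h5 : 1 - (k - 1) * p ≤ Real.exp (-((k - 1) * p)) := by
        have := Real.add_one_le_exp (-(((k : ℝ) - 1) * p)); linarith
      have h6 := mul_le_mul_of_nonneg_right h5 (hz j (by omega))
      have h7 := mul_le_mul_of_nonneg_left h1 (Real.exp_pos (-(((k : ℝ) - 1) * p))).le
      have h8 : Real.exp (-(((k : ℝ) - 1) * p * ((j + 1 : ℕ) : ℝ))) =
          Real.exp (-((k - 1) * p)) * Real.exp (-((k - 1) * p * j)) := by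
        rw [← Real.exp_add]; congr 1; push_cast; ring
      rw [h8, mul_assoc]
      linarith
  have h1 := hrec J le_rfl
  have h2 : Real.exp (-(((k : ℝ) - 1) * p * J)) ≤ 1 / (k : ℝ) ^ 2 := by
    obtain ⟨m, rfl⟩ : ∃ m, k = m + 1 := ⟨k - 1, by omega⟩
    have hm : ((m + 1 : ℕ) : ℝ) ≤ 2 ^ m := by
      exact_mod_cast Nat.lt_two_pow_self (n := m)
    have hlog : Real.exp (-((((m + 1 : ℕ) : ℝ) - 1) * p * J)) ≤ Real.exp (-(Real.log (2 ^ m) + Real.log (2 ^ m))) := by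
      rw [Real.exp_le_exp, Real.log_pow]
      push_cast
      have := mul_le_mul_of_nonneg_left hJ (Nat.cast_nonneg (α := ℝ) m)
      linarith
    refine hlog.trans ?_
    rw [Real.exp_neg, Real.exp_add, Real.exp_log (by positivity), ← one_div]
    apply one_div_le_one_div_of_le (by positivity)
    rw [sq]
    gcongr
  have hkp : (0 : ℝ) < (k : ℝ) ^ 2 := by positivity
  have h3 : C - k * f ≤ 1 / (k : ℝ) ^ 2 * (C - f) := by
    have a1 := mul_le_mul_of_nonneg_left (hy J le_rfl) (show (0 : ℝ) ≤ k - 1 by linarith)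
    have a2 := mul_le_mul_of_nonneg_right h2 (hz 0 (Nat.zero_le _))
    have a3 : 1 / (k : ℝ) ^ 2 * (C - f - (k - 1) * y 0) ≤ 1 / (k : ℝ) ^ 2 * (C - f) := by
      apply mul_le_mul_of_nonneg_left _ (by positivity)
      have := mul_nonneg (show (0 : ℝ) ≤ k - 1 by linarith) hy0
      linarith
    linarith
  have h4 : (k : ℝ) ^ 2 * (C - k * f) ≤ C - f := by
    have := mul_le_mul_of_nonneg_left h3 hkp.le
    rwa [← mul_assoc, mul_one_div_cancel hkp.ne', one_mul] at this
  have h5 : (0 : ℝ) < k - 1 := by linarith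
  refine le_of_mul_le_mul_left ?_ h5
  nlinarith

theorem num_one (p : ℝ) (hp0 : 0 < p) (C f : ℝ) (y : ℕ → ℝ)
    (J : ℕ) (hy : y J ≤ f) (hy0 : 0 ≤ y 0)
    (main : ∀ j < J, C ≤ f + (y (j + 1) - y j) / p) :
    p * J * (C - f) ≤ f := by
  have hrec : ∀ j ≤ J, p * j * (C - f) ≤ y j := by
    intro j
    induction j with
    | zero => intro _; simpa using hy0
    | succ j ih =>
      intro hj
      have h1 := ih (by omega)
      have h2 := main j (by omega)
      have h3 : p * (C - f) ≤ y (j + 1) - y j := by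
        rw [← le_div_iff₀' hp0]; linarith
      push_cast
      linarith
  exact (hrec J le_rfl).trans hy

theorem num_fin (k : ℕ) (hk : 0 < k) (p : ℝ) (hp0 : 0 < p)
    (ε : ℝ) (hε0 : 0 < ε) (hε1 : ε < 1)
    (τ : ℕ) (hτ : τ = ⌈(2 / (ε * p)) * Real.log (2 / ε)⌉₊) (P f : ℝ) (hP : 0 ≤ P) (y : ℕ → ℝ)
    (hf : 0 ≤ f) (hy : ∀ j ≤ τ, y j ≤ f) (hy0 : 0 ≤ y 0)
    (main : ∀ (s : ℝ) (j : ℕ), 1 ≤ s → j < τ → j * p ≤ s →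
      (1 - s * ε / 2) * P ≤ f + (k - 1) * y j + (y (j + 1) - y j) / p) :
    ((1 - ε) / ((k : ℝ) + 1 / ((k : ℝ) + 1))) * P ≤ f := by
  have hJτ : ∀ a : ℝ, a ≤ 2 / ε * Real.log (2 / ε) → ⌈a / p⌉₊ ≤ τ := by
    intro a ha
    rw [hτ]
    apply Nat.ceil_mono
    rw [div_le_iff₀ hp0]
    have : 2 / (ε * p) * Real.log (2 / ε) * p = 2 / ε * Real.log (2 / ε) := by
      field_simp
    rwa [this]
  have hJa : ∀ (a : ℝ) (j : ℕ), j < ⌈a / p⌉₊ → j * p ≤ a := by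
    intro a j hj
    rw [Nat.lt_ceil, lt_div_iff₀ hp0] at hj
    exact hj.le
  have hJb : ∀ a : ℝ, a ≤ p * ⌈a / p⌉₊ := by
    intro a
    rw [← div_le_iff₀' hp0]; exact Nat.le_ceil _
  have h2ε : (2 : ℝ) ≤ 2 / ε := by rw [le_div_iff₀ hε0]; linarith
  rcases Nat.lt_or_ge 1 k with hk2 | hk1
  · have hk' : (2 : ℝ) ≤ k := by exact_mod_cast hk2
    have hl2 : 0 ≤ Real.log 2 := Real.log_nonneg (by norm_num)
    have ha : 2 * Real.log 2 ≤ 2 / ε * Real.log (2 / ε) := by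
      have : Real.log 2 ≤ Real.log (2 / ε) := Real.log_le_log (by norm_num) h2ε
      gcongr
    have h := num_ge_two k hk2 p hp0 ((1 - ε) * P) f y ⌈2 * Real.log 2 / p⌉₊ (hJb _) hf
      (fun j hj => hy j (hj.trans (hJτ _ ha))) hy0 (fun j hj => by
        have := main 2 j (by norm_num) (hj.trans_le (hJτ _ ha)) ((hJa _ j hj).trans (by
          have := Real.log_two_lt_d9; linarith))
        have e : (1 - 2 * ε / 2) = 1 - ε := by ring
        rwa [e] at this)
    have e : (k : ℝ) + 1 / (k + 1) = (k ^ 2 + k + 1) / (k + 1) := by field_simp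
    rw [e, div_div_eq_mul_div, div_mul_eq_mul_div, div_le_iff₀ (by positivity)]
    linarith
  · obtain rfl : k = 1 := by omega
    have main' : ∀ (s : ℝ) (j : ℕ), 1 ≤ s → j < τ → j * p ≤ s →
      (1 - s * ε / 2) * P ≤ f + (y (j + 1) - y j) / p := by
      intro s j h1 h2 h3
      have := main s j h1 h2 h3
      simpa using this
    have hlog : 2 / ε - 1 ≤ 2 / ε * Real.log (2 / ε) := by
      have h := Real.one_sub_inv_le_log_of_pos (show 0 < 2 / ε by positivity)
      have h' := mul_le_mul_of_nonneg_left h (show 0 ≤ 2 / ε by positivity)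
      rwa [mul_sub, mul_one, mul_inv_cancel₀ (by positivity)] at h'
    have e : ((1 : ℕ) : ℝ) + 1 / (((1 : ℕ) : ℝ) + 1) = 3 / 2 := by norm_num
    rw [e]
    suffices h : 2 / 3 * ((1 - ε) * P) ≤ f by
      refine le_trans (le_of_eq ?_) h
      ring
    have hεP : 0 ≤ ε * P := by positivity
    have gen : ∀ s : ℝ, 1 ≤ s → s ≤ 2 / ε * Real.log (2 / ε) →
        (1 - s * ε / 2) * P ≤ f ∨ s * ((1 - s * ε / 2) * P - f) ≤ f := by
      intro s hs1 hs2
      have h := num_one p hp0 ((1 - s * ε / 2) * P) f y ⌈s / p⌉₊ (hy _ (hJτ s hs2)) hy0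
        (fun j hj => main' s j hs1 (hj.trans_le (hJτ s hs2)) (hJa s j hj))
      rcases le_total ((1 - s * ε / 2) * P) f with h' | h'
      · exact Or.inl h'
      · right
        exact (mul_le_mul_of_nonneg_right (hJb s) (sub_nonneg.2 h')).trans h
    rcases le_total ε (2 / 3) with hε | hε
    · have h3 : 3 ≤ 2 / ε := by rw [le_div_iff₀ hε0]; linarith
      rcases gen 2 (by norm_num) (by linarith) with h | h
      · nlinarith
      · nlinarith
    · rcases gen 1 le_rfl (by linarith) with h | h
      · nlinarith
      · nlinarith

theorem bestVal_eq {k : ℕ} (M : Fin k → FinMatroid E) (w : E → ℝ) (O : Finset E → Finset E)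
    (hOmem : ∀ S, ∀ l, (M l).Indep (O S)) (hOsub : ∀ S, O S ⊆ S)
    (hOmax : ∀ S, ∀ T ⊆ S, (∀ l, (M l).Indep T) → setWeight w T ≤ setWeight w (O S))
    (S : Finset E) :
    bestVal {T | ∀ l, (M l).Indep T} (setWeight w) S = ∑ e ∈ O S, w e := by
  apply IsGreatest.csSup_eq
  constructor
  · exact ⟨O S, ⟨hOsub S, hOmem S⟩, rfl⟩
  · rintro _ ⟨T, ⟨h1, h2⟩, rfl⟩
    exact hOmax S T h1 h2

theorem marg_nonneg {p : ℝ} (hp0 : 0 ≤ p) (hp1 : p ≤ 1) (O : Finset E → Finset E) (e : E) :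
    0 ≤ marg p O e := by
  rw [marg, ← expec_const (E := E) p 0]
  exact expec_mono hp0 hp1 fun A => by split_ifs <;> norm_num [expec_const]

theorem marg_le_one {p : ℝ} (hp0 : 0 ≤ p) (hp1 : p ≤ 1) (O : Finset E → Finset E) (e : E) :
    marg p O e ≤ 1 := by
  rw [marg]
  refine le_trans (expec_mono (g := fun _ => 1) hp0 hp1 fun A => ?_) (expec_const (E := E) p 1).le
  split_ifs <;> norm_num

theorem fin_main {k : ℕ} (hk : 0 < k) (M : Fin k → FinMatroid E)
    (w : E → ℝ) (hw : ∀ e, 0 ≤ w e)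
    (p : ℝ) (hp0 : 0 < p) (hp1 : p ≤ 1)
    (ε : ℝ) (hε0 : 0 < ε) (hε1 : ε < 1)
    (τ : ℕ) (hτ : τ = ⌈(2 / (ε * p)) * Real.log (2 / ε)⌉₊)
    (O : Finset E → Finset E)
    (hOmem : ∀ S, ∀ l, (M l).Indep (O S)) (hOsub : ∀ S, O S ⊆ S)
    (hOmax : ∀ S, ∀ T ⊆ S, (∀ l, (M l).Indep T) → ∑ e ∈ T, w e ≤ ∑ e ∈ O S, w e) :
    ((1 - ε) / ((k : ℝ) + 1 / ((k : ℝ) + 1))) * expec (fun _ => p) (fun A => ∑ e ∈ O A, w e) ≤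
      (Kop p O ^ τ) (Fval p w O univ) ∅ := by
  have hOPT : expec (fun _ => p) (fun A => ∑ e ∈ O A, w e) = ∑ e, marg p O e * w e := by
    have := expec_optsum p O w univ
    simpa using this
  rw [hOPT]
  set L : Finset E := univ.filter (fun e => marg p O e < ε * p / 2) with hL
  have hm0 := marg_nonneg hp0.le hp1 O
  have hm1 := marg_le_one hp0.le hp1 O
  have hVmono : ∀ S T, S ⊆ T → ∑ e ∈ O S, w e ≤ ∑ e ∈ O T, w e := fun S T h =>
    hOmax T _ ((hOsub S).trans h) (hOmem S)
  have hFnn : ∀ Y Q, 0 ≤ Fval p w O Y Q := fun Y Q => by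
    rw [Fval, ← expec_const (E := E) p 0]
    exact expec_mono hp0.le hp1 fun A => sum_nonneg fun e _ => hw e
  have hle : ∀ Q Q', Q ⊆ Q' → Fval p w O L Q ≤ Fval p w O univ Q' := fun Q Q' h =>
    expec_mono hp0.le hp1 fun A => hVmono _ _ (by
      intro x; have := @h x; simp only [mem_inter, mem_univ]; tauto)
  have hy : ∀ j ≤ τ, (Kop p O ^ j) (Fval p w O L) ∅ ≤ (Kop p O ^ τ) (Fval p w O univ) ∅ := by
    intro j hj
    obtain ⟨m, rfl⟩ := Nat.exists_eq_add_of_le hj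
    rw [pow_add, Module.End.mul_apply]
    exact Kop_pow_mono hp0.le hp1 O _ _ j (fun Q =>
      Kop_pow_ge hp0.le hp1 O _ _ m Q fun Q' hQ => hle Q Q' hQ) ∅
  have hexp : ∀ e ∉ L, (1 - marg p O e) ^ τ ≤ ε / 2 := by
    intro e he
    have he' : ε * p / 2 ≤ marg p O e := by
      rw [hL, mem_filter] at he
      simpa using he
    have h1 : (1 - marg p O e) ^ τ ≤ Real.exp (-marg p O e) ^ τ := by
      apply pow_le_pow_left₀
      · linarith [hm1 e]
      · have := Real.add_one_le_exp (-marg p O e); linarith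
    refine h1.trans ?_
    rw [← Real.exp_nat_mul]
    have h2 : Real.log (2 / ε) ≤ τ * marg p O e := by
      have h3 : 2 / (ε * p) * Real.log (2 / ε) ≤ τ := by rw [hτ]; exact Nat.le_ceil _
      have h4 := mul_le_mul h3 he' (by positivity) (Nat.cast_nonneg _)
      refine le_trans (le_of_eq ?_) h4
      field_simp
    calc Real.exp (τ * -marg p O e) ≤ Real.exp (-Real.log (2 / ε)) := by
          rw [Real.exp_le_exp]; linarith
      _ = ε / 2 := by
          rw [Real.exp_neg, Real.exp_log (by positivity), inv_div]
  refine num_fin k hk p hp0 ε hε0 hε1 τ hτ _ _ (sum_nonneg fun e _ => mul_nonneg (hm0 e) (hw e))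
    (fun j => (Kop p O ^ j) (Fval p w O L) ∅)
    (Kop_pow_ge hp0.le hp1 O _ 0 τ ∅ fun Q _ => hFnn _ _) hy (by simpa using hFnn L ∅) ?_
  intro s j hs hj hjs
  obtain ⟨m, hm⟩ := Nat.exists_eq_add_of_le hj.le
  have h := agg M w hw p hp0 hp1 O hOmem hOsub hOmax L j m
  rw [← hm] at h
  refine le_trans ?_ h
  rw [← sum_compl_add_sum L, mul_add, mul_sum, mul_sum]
  refine add_le_add (sum_le_sum fun e he => ?_) (sum_le_sum fun e he => ?_)
  · rw [mul_comm]
    apply mul_le_mul_of_nonneg_left _ (mul_nonneg (hm0 e) (hw e))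
    have := hexp e (mem_compl.1 he)
    nlinarith
  · rw [mul_comm]
    apply mul_le_mul_of_nonneg_left _ (mul_nonneg (hm0 e) (hw e))
    have he' : marg p O e < ε * p / 2 := (mem_filter.1 he).2
    have h1 := one_add_mul_le_pow (show -2 ≤ -marg p O e by linarith [hm1 e]) j
    have h2 : (j : ℝ) * marg p O e ≤ j * (ε * p / 2) :=
      mul_le_mul_of_nonneg_left he'.le (Nat.cast_nonneg _)
    have h3 := mul_le_mul_of_nonneg_right hjs (show 0 ≤ ε / 2 by positivity)
    rw [← sub_eq_add_neg] at h1
    linarith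

/-- The repeated-sampling sparsifier for additive optimization over the
intersection of `k` matroids: with `τ = ⌈(2/(εp)) · log(2/ε)⌉` independent samples
`Q_i = OPTSOL(R_i)` of the stochastic optimum, the union `Q = Q_1 ∪ ⋯ ∪ Q_τ` satisfies
`E[max{w(T) : T ⊆ Q ∩ R, T ∈ 𝓘}] ≥ ((1−ε)/(k + 1/(k+1))) · E[w(OPTSOL(R))]`. -/
theorem stmt_11 (k : ℕ) (hk : 0 < k) (M : Fin k → FinMatroid E)
    (w : E → ℝ) (hw : ∀ e, 0 ≤ w e)
    (p : ℝ) (hp0 : 0 < p) (hp1 : p ≤ 1)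
    (ε : ℝ) (hε0 : 0 < ε) (hε1 : ε < 1)
    (τ : ℕ) (hτ : τ = ⌈(2 / (ε * p)) * Real.log (2 / ε)⌉₊)
    (OPTSOL : Finset E → Finset E)
    (hOmem : ∀ S, ∀ ℓ, (M ℓ).Indep (OPTSOL S))
    (hOsub : ∀ S, OPTSOL S ⊆ S)
    (hOmax : ∀ S, ∀ T ⊆ S, (∀ ℓ, (M ℓ).Indep T) →
      setWeight w T ≤ setWeight w (OPTSOL S)) :
    ((1 - ε) / ((k : ℝ) + 1 / ((k : ℝ) + 1))) *
        expec (fun _ => p) (fun A => setWeight w (OPTSOL A))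
      ≤ ∑ Rs : Fin τ → Finset E, ∑ A : Finset E,
          ((∏ i, prodWeight (fun _ => p) (Rs i)) * prodWeight (fun _ => p) A) *
            bestVal {T | ∀ ℓ, (M ℓ).Indep T} (setWeight w)
              ((Finset.univ.biUnion fun i => OPTSOL (Rs i)) ∩ A) := by
  have h := fin_main hk M w hw p hp0 hp1 ε hε0 hε1 τ hτ OPTSOL hOmem hOsub
    (fun S T h1 h2 => hOmax S T h1 h2)
  refine le_trans h (le_of_eq ?_)
  rw [← Kop_pow_sum]
  refine sum_congr rfl fun Rs _ => ?_
  rw [empty_union, Fval, expec, mul_sum]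
  refine sum_congr rfl fun A _ => ?_
  rw [bestVal_eq M w OPTSOL hOmem hOsub hOmax, inter_univ, mul_assoc]
end
end

section
/- Let M_1, …, M_k be matroids on the same finite ground set E with common independent sets 𝓘, let w : E → ℝ≥0, let p ∈ (0,1], and let τ be a positive integer. For every subset S ⊆ E fix OPTSOL(S) ∈ 𝓘 with OPTSOL(S) ⊆ S maximizing w(OPTSOL(S)). Let R, R_1, …, R_τ be independent random subsets of E, each containing every element independently with probability p, let Q_i = OPTSOL(R_i) and Q = Q_1 ∪ … ∪ Q_τ. Then there exists a random set I* (a deterministic function of (R_1,…,R_τ,R)) such that I* ⊆ Q ∩ R and I* ∈ 𝓘 with probability 1, and for every element e ∈ E and every i ∈ {1,…,τ} with Pr[e ∈ Q_i \ (Q_1 ∪ … ∪ Q_{i−1})] > 0: Pr[ e ∈ I* | e ∈ Q_i \ (Q_1 ∪ … ∪ Q_{i−1}) ] ≥ p · (1−p)^{k(i−1)}. -/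
open Finset

noncomputable section

variable {E : Type*} [Fintype E] [DecidableEq E]

open Classical in
/-- Expectation of `f` over the `p`-random subset of `G`. -/
def exOn (p : ℝ) (G : Finset E) (f : Finset E → ℝ) : ℝ :=
  ∑ A ∈ G.powerset, (p ^ A.card * (1 - p) ^ (G \ A).card) * f A

theorem exOn_empty (p : ℝ) (f : Finset E → ℝ) : exOn p ∅ f = f ∅ := by
  simp [exOn]

theorem exOn_insert (p : ℝ) (G : Finset E) (a : E) (ha : a ∉ G) (f : Finset E → ℝ) :
    exOn p (insert a G) f = p * exOn p G (fun A => f (insert a A)) + (1 - p) * exOn p G f := by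
  unfold exOn
  rw [Finset.sum_powerset_insert ha, add_comm, Finset.mul_sum, Finset.mul_sum]
  congr 1
  · refine Finset.sum_congr rfl fun A hA => ?_
    have hA' := Finset.mem_powerset.1 hA
    have haA : a ∉ A := fun h => ha (hA' h)
    have h1 : insert a G \ insert a A = G \ A := by
      ext x; simp only [mem_sdiff, mem_insert]; grind
    rw [Finset.card_insert_of_notMem haA, h1]; ring
  · refine Finset.sum_congr rfl fun A hA => ?_
    have hA' := Finset.mem_powerset.1 hA
    have haA : a ∉ A := fun h => ha (hA' h)
    have h1 : insert a G \ A = insert a (G \ A) := by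
      ext x; simp only [mem_sdiff, mem_insert]; grind
    rw [h1, Finset.card_insert_of_notMem (by simp [ha])]; ring

theorem exOn_mono {p : ℝ} (hp0 : 0 ≤ p) (hp1 : p ≤ 1) (G : Finset E) {f g : Finset E → ℝ}
    (h : ∀ A ⊆ G, f A ≤ g A) : exOn p G f ≤ exOn p G g := by
  unfold exOn
  refine Finset.sum_le_sum fun A hA => ?_
  have : 0 ≤ 1 - p := by linarith
  exact mul_le_mul_of_nonneg_left (h A (Finset.mem_powerset.1 hA)) (by positivity)

theorem exOn_mul_const (p c : ℝ) (G : Finset E) (f : Finset E → ℝ) :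
    exOn p G (fun A => f A * c) = exOn p G f * c := by
  unfold exOn
  rw [Finset.sum_mul]
  exact Finset.sum_congr rfl fun A _ => by ring

theorem exOn_const (p c : ℝ) (G : Finset E) : exOn p G (fun _ => c) = c := by
  induction G using Finset.induction_on with
  | empty => rw [exOn_empty]
  | insert a G ha ih => rw [exOn_insert p G a ha, ih]; ring

theorem exOn_union (p : ℝ) (G H : Finset E) (hd : Disjoint G H) (f : Finset E → ℝ) :
    exOn p (G ∪ H) f = exOn p G (fun T => exOn p H (fun T' => f (T ∪ T'))) := by
  induction G using Finset.induction_on generalizing f with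
  | empty => simp [exOn_empty]
  | insert a G ha ih =>
    have hd' : Disjoint G H := hd.mono_left (Finset.subset_insert a G)
    have haH : a ∉ H := Finset.disjoint_left.1 hd (Finset.mem_insert_self a G)
    rw [exOn_insert p G a ha, Finset.insert_union, exOn_insert p (G ∪ H) a (by simp [ha, haH]),
      ih hd', ih hd']
    simp only [Finset.insert_union]

open Classical in
theorem exOn_mem (p : ℝ) (G : Finset E) (e : E) (he : e ∈ G) :
    exOn p G (fun A => if e ∈ A then 1 else 0) = p := by
  rw [← Finset.insert_erase he, exOn_insert p _ e (by simp)]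
  have h2 : exOn p (G.erase e) (fun A => if e ∈ A then (1 : ℝ) else 0)
      = exOn p (G.erase e) (fun _ => 0) := by
    unfold exOn
    refine Finset.sum_congr rfl fun A hA => ?_
    have : e ∉ A := fun h => by simpa using Finset.mem_powerset.1 hA h
    simp [this]
  rw [h2, exOn_const]
  simp [exOn_const]

/-- The Mathlib matroid of a `FinMatroid`. -/
def FinMatroid.toMat (M : FinMatroid E) : Matroid E :=
  (IndepMatroid.ofFinset Set.univ M.Indep M.empty_indep
    (fun _ _ hJ hIJ => M.indep_subset hJ hIJ)
    (fun _ _ hI hJ h => M.indep_exchange hI hJ h)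
    (fun _ _ => Set.subset_univ _)).matroid

theorem FinMatroid.toMat_indep (M : FinMatroid E) (S : Finset E) :
    M.toMat.Indep (S : Set E) ↔ M.Indep S := by
  simp [FinMatroid.toMat]

theorem FinMatroid.exchange_pair (M : FinMatroid E) (D U P : Finset E) (a : E)
    (hUind : M.Indep (D ∪ U)) (haP : a ∉ P) (haU : a ∉ U) (haD : a ∉ D)
    (hPind : M.Indep (D ∪ insert a P)) (hdep : ¬ M.Indep (insert a (D ∪ U))) :
    ∃ b ∈ U, b ∉ D ∧ M.Indep (insert b (D ∪ P)) ∧ M.Indep (insert a (D ∪ U.erase b)) := by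
  have hI : M.toMat.Indep ((D ∪ U : Finset E) : Set E) := (M.toMat_indep _).2 hUind
  have hE : M.toMat.E = Set.univ := rfl
  have haDU : a ∉ ((D ∪ U : Finset E) : Set E) := by simp [haD, haU]
  have hacl : a ∈ M.toMat.closure ((D ∪ U : Finset E) : Set E) := by
    by_contra hcon
    apply hdep
    rw [← M.toMat_indep, Finset.coe_insert]
    exact (hI.notMem_closure_iff_of_notMem haDU (by simp [hE])).1 hcon
  have hPI : M.toMat.Indep (insert a ((D ∪ P : Finset E) : Set E)) := by
    rw [← Finset.coe_insert, M.toMat_indep]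
    convert hPind using 1
    ext x; simp only [mem_union, mem_insert]; tauto
  have haDP : a ∉ ((D ∪ P : Finset E) : Set E) := by simp [haD, haP]
  have hFI : M.toMat.Indep ((D ∪ P : Finset E) : Set E) := hPI.subset (Set.subset_insert _ _)
  have hanF : a ∉ M.toMat.closure ((D ∪ P : Finset E) : Set E) :=
    (hFI.notMem_closure_iff_of_notMem haDP (by simp [hE])).2 hPI
  have hC := hI.fundCircuit_isCircuit hacl haDU
  have haC := M.toMat.mem_fundCircuit a ((D ∪ U : Finset E) : Set E)
  have hex : ∃ b ∈ M.toMat.fundCircuit a ((D ∪ U : Finset E) : Set E) \ {a},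
      b ∉ M.toMat.closure ((D ∪ P : Finset E) : Set E) := by
    by_contra hcon
    push Not at hcon
    exact hanF (M.toMat.closure_subset_closure_of_subset_closure hcon
      (hC.mem_closure_sdiff_singleton_of_mem haC))
  obtain ⟨b, ⟨hbC, hba⟩, hbcl⟩ := hex
  have hba : b ≠ a := hba
  have hbDP : b ∉ ((D ∪ P : Finset E) : Set E) := fun h =>
    hbcl (M.toMat.mem_closure_of_mem h (by simp [hE]))
  have hbDU := M.toMat.fundCircuit_subset_insert a _ hbC
  have hbD : b ∉ D := fun h => hbDP (by simp [h])
  have hbU : b ∈ U := by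
    rcases hbDU with h | h
    · exact absurd h hba
    · simp at h; tauto
  refine ⟨b, hbU, hbD, ?_, ?_⟩
  · rw [← M.toMat_indep, Finset.coe_insert]
    exact (hFI.notMem_closure_iff_of_notMem hbDP (by simp [hE])).1 hbcl
  · rw [← M.toMat_indep]
    have := (hI.mem_fundCircuit_iff hacl haDU).1 hbC
    convert this using 1
    ext x; simp; grind

/-- One exchange step, in a form covering also the case where nothing is displaced. -/
theorem FinMatroid.step (M : FinMatroid E) (D U P : Finset E) (a : E)
    (hUind : M.Indep (D ∪ U)) (haP : a ∉ P) (haU : a ∉ U) (haD : a ∉ D)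
    (hPind : M.Indep (D ∪ insert a P)) (hDU : Disjoint D U) :
    ∃ B ⊆ U, M.Indep ((D ∪ B) ∪ P) ∧ M.Indep (insert a D ∪ (U \ B)) := by
  by_cases h : M.Indep (insert a (D ∪ U))
  · refine ⟨∅, by simp, ?_, by simpa using h⟩
    exact M.indep_subset hPind (by intro x; simp; tauto)
  · obtain ⟨b, hbU, hbD, h1, h2⟩ := M.exchange_pair D U P a hUind haP haU haD hPind h
    refine ⟨{b}, by simpa using hbU, ?_, ?_⟩
    · convert h1 using 1; ext x; simp only [mem_union, mem_insert, mem_singleton]; tauto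
    · convert h2 using 1; ext x; simp; grind

open Classical in
theorem phase {ι : Type*} [Fintype ι] (M : ι → FinMatroid E) {p : ℝ} (hp0 : 0 ≤ p) (hp1 : p ≤ 1)
    (P : Finset E) : ∀ (D U : ι → Finset E),
    (∀ l, Disjoint (D l) P) → (∀ l, Disjoint (U l) P) → (∀ l, Disjoint (D l) (U l)) →
    (∀ l, (M l).Indep (D l ∪ P)) → (∀ l, (M l).Indep (D l ∪ U l)) →
    ∃ g : Finset E → Finset E,
      (∀ T ⊆ P, ∀ l, (M l).Indep (D l ∪ (U l \ g T) ∪ T)) ∧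
      ∀ e, (1 - p) ^ (Finset.univ.filter fun l => e ∈ U l).card ≤
        exOn p P (fun T => if e ∈ g T then 0 else 1) := by
  have hq0 : 0 ≤ 1 - p := by linarith
  have hq1 : 1 - p ≤ 1 := by linarith
  induction P using Finset.induction_on with
  | empty =>
    intro D U _ _ _ _ hU
    refine ⟨fun _ => ∅, ?_, ?_⟩
    · intro T hT l
      rw [Finset.subset_empty.1 hT]; simpa using hU l
    · intro e
      simp only [Finset.notMem_empty, if_false, exOn_const]
      exact pow_le_one₀ hq0 hq1
  | insert a P haP ih =>
    intro D U hDP hUP hDU hPI hUI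
    have haD : ∀ l, a ∉ D l := fun l h =>
      Finset.disjoint_left.1 (hDP l) h (Finset.mem_insert_self a P)
    have haU : ∀ l, a ∉ U l := fun l h =>
      Finset.disjoint_left.1 (hUP l) h (Finset.mem_insert_self a P)
    have hDP' : ∀ l, Disjoint (D l) P := fun l => (hDP l).mono_right (Finset.subset_insert a P)
    have hUP' : ∀ l, Disjoint (U l) P := fun l => (hUP l).mono_right (Finset.subset_insert a P)
    choose B hBU hB1 hB2 using fun l =>
      (M l).step (D l) (U l) P a (hUI l) haP (haU l) (haD l) (hPI l) (hDU l)
    -- the coin of `a` is heads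
    obtain ⟨g1, hg1, hg1'⟩ := ih (fun l => insert a (D l)) (fun l => U l \ B l)
      (fun l => by rw [Finset.disjoint_insert_left]; exact ⟨haP, hDP' l⟩)
      (fun l => (hUP' l).mono_left Finset.sdiff_subset)
      (fun l => by
        rw [Finset.disjoint_insert_left]
        exact ⟨fun h => haU l (Finset.mem_sdiff.1 h).1, (hDU l).mono_right Finset.sdiff_subset⟩)
      (fun l => by
        have h : insert a (D l) ∪ P = D l ∪ insert a P := by ext x; simp only [mem_union, mem_insert]; tauto
        rw [h]; exact hPI l)
      (fun l => hB2 l)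
    -- the coin of `a` is tails
    obtain ⟨g0, hg0, hg0'⟩ := ih (fun l => D l ∪ B l) (fun l => U l \ B l)
      (fun l => by
        rw [Finset.disjoint_union_left]
        exact ⟨hDP' l, (hUP' l).mono_left (hBU l)⟩)
      (fun l => (hUP' l).mono_left Finset.sdiff_subset)
      (fun l => by
        rw [Finset.disjoint_union_left]
        exact ⟨(hDU l).mono_right Finset.sdiff_subset, Finset.disjoint_sdiff⟩)
      (fun l => hB1 l)
      (fun l => (M l).indep_subset (hUI l) (by
        have := hBU l
        intro x; simp; grind))
    refine ⟨fun T => if a ∈ T then Finset.univ.biUnion B ∪ g1 (T.erase a) else g0 T, ?_, ?_⟩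
    · intro T hT l
      by_cases haT : a ∈ T
      · simp only [haT, if_true]
        refine (M l).indep_subset (hg1 (T.erase a) (by
          intro x hx
          have h1 := Finset.mem_erase.1 hx
          exact (Finset.mem_insert.1 (hT h1.2)).resolve_left h1.1) l) ?_
        intro x
        simp only [mem_union, mem_sdiff, mem_insert, mem_erase, mem_biUnion, mem_univ, true_and]
        grind
      · simp only [haT, if_false]
        refine (M l).indep_subset (hg0 T (by
          intro x hx
          exact (Finset.mem_insert.1 (hT hx)).resolve_left (by rintro rfl; exact haT hx)) l) ?_
        intro x
        simp only [mem_union, mem_sdiff]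
        grind
    · intro e
      rw [exOn_insert p P a haP]
      have e0 : (1 - p) ^ (Finset.univ.filter fun l => e ∈ U l \ B l).card ≤
          exOn p P (fun T => if e ∈ (if a ∈ T then Finset.univ.biUnion B ∪ g1 (T.erase a)
            else g0 T) then 0 else 1) := by
        refine (hg0' e).trans (exOn_mono hp0 hp1 P fun T hT => ?_)
        have : a ∉ T := fun h => haP (hT h)
        simp [this]
      have hnn : 0 ≤ exOn p P (fun T => if e ∈ (if a ∈ insert a T then
          Finset.univ.biUnion B ∪ g1 ((insert a T).erase a) else g0 (insert a T))
          then (0 : ℝ) else 1) := by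
        refine (exOn_const p 0 P).symm.le.trans (exOn_mono hp0 hp1 P fun T hT => ?_)
        split_ifs <;> norm_num
      by_cases heB : ∃ l, e ∈ B l
      · obtain ⟨l, hl⟩ := heB
        have hlt : (Finset.univ.filter fun l => e ∈ U l \ B l).card + 1 ≤
            (Finset.univ.filter fun l => e ∈ U l).card := by
          refine Finset.card_lt_card ?_
          rw [Finset.ssubset_iff_of_subset]
          · exact ⟨l, by simpa using hBU l hl, by simp [hl]⟩
          · intro l'; simp; tauto
        calc (1 - p) ^ (Finset.univ.filter fun l => e ∈ U l).card
            ≤ (1 - p) ^ ((Finset.univ.filter fun l => e ∈ U l \ B l).card + 1) :=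
              pow_le_pow_of_le_one hq0 hq1 hlt
          _ = (1 - p) * (1 - p) ^ (Finset.univ.filter fun l => e ∈ U l \ B l).card := by ring
          _ ≤ _ := by
              have := mul_le_mul_of_nonneg_left e0 hq0
              have := mul_nonneg hp0 hnn
              linarith
      · push Not at heB
        have e1 : (1 - p) ^ (Finset.univ.filter fun l => e ∈ U l \ B l).card ≤
            exOn p P (fun T => if e ∈ (if a ∈ insert a T then
          Finset.univ.biUnion B ∪ g1 ((insert a T).erase a) else g0 (insert a T))
          then (0 : ℝ) else 1) := by
          refine (hg1' e).trans (exOn_mono hp0 hp1 P fun T hT => ?_)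
          have : a ∉ T := fun h => haP (hT h)
          simp [this, heB]
        have hs : (Finset.univ.filter fun l => e ∈ U l \ B l) =
            (Finset.univ.filter fun l => e ∈ U l) := by
          ext l; simp [heB]
        rw [hs] at e0 e1
        have h1 := mul_le_mul_of_nonneg_left e0 hq0
        have h2 := mul_le_mul_of_nonneg_left e1 hp0
        calc _ = p * (1 - p) ^ (Finset.univ.filter fun l => e ∈ U l).card +
              (1 - p) * (1 - p) ^ (Finset.univ.filter fun l => e ∈ U l).card := by ring
          _ ≤ _ := add_le_add h2 h1

open Classical in
theorem multi {k : ℕ} (M : Fin k → FinMatroid E) {p : ℝ} (hp0 : 0 ≤ p) (hp1 : p ≤ 1)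
    (n : ℕ) : ∀ (G C : Finset E) (P : ℕ → Finset E),
    Disjoint C G → (∀ i, P i ⊆ G) → (∀ i j, i < j → Disjoint (P i) (P j)) →
    (∀ i l, (M l).Indep (C ∪ P i)) →
    ∃ I : Finset E → Finset E,
      (∀ A ⊆ G, I A ⊆ A ∧ ∀ x ∈ I A, ∃ i, x ∈ P i) ∧
      (∀ A ⊆ G, ∀ l, (M l).Indep (C ∪ I A)) ∧
      ∀ i < n, ∀ e ∈ P i, p * (1 - p) ^ (k * i) ≤
        exOn p G (fun A => if e ∈ I A then 1 else 0) := by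
  have hq0 : 0 ≤ 1 - p := by linarith
  have hq1 : 1 - p ≤ 1 := by linarith
  induction n with
  | zero =>
    intro G C P _ _ _ hI
    refine ⟨fun _ => ∅, by simp, ?_, by simp⟩
    intro A _ l
    exact (M l).indep_subset (hI 0 l) (by simp)
  | succ n ih =>
    intro G C P hCG hPG hPd hI
    choose g hg1 hg2 using fun i => phase M hp0 hp1 (P 0) (fun _ => C) (fun _ => P (i + 1))
      (fun _ => hCG.mono_right (hPG 0)) (fun _ => (hPd 0 (i + 1) (by omega)).symm)
      (fun _ => hCG.mono_right (hPG _)) (fun l => hI 0 l) (fun l => hI (i + 1) l)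
    have key : ∀ T, ∃ I : Finset E → Finset E, T ⊆ P 0 →
      (∀ A ⊆ G \ P 0, I A ⊆ A ∧ ∀ x ∈ I A, ∃ i, x ∈ P (i + 1) \ g i T) ∧
      (∀ A ⊆ G \ P 0, ∀ l, (M l).Indep ((C ∪ T) ∪ I A)) ∧
      ∀ i < n, ∀ e ∈ P (i + 1) \ g i T, p * (1 - p) ^ (k * i) ≤
        exOn p (G \ P 0) (fun A => if e ∈ I A then 1 else 0) := by
      intro T
      by_cases hT : T ⊆ P 0
      · obtain ⟨I, hI'⟩ := ih (G \ P 0) (C ∪ T) (fun i => P (i + 1) \ g i T)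
          (by
            rw [Finset.disjoint_union_left]
            exact ⟨hCG.mono_right Finset.sdiff_subset,
              Finset.disjoint_sdiff.mono_left hT⟩)
          (fun i x hx => by
            have hx' := (Finset.mem_sdiff.1 hx).1
            exact Finset.mem_sdiff.2 ⟨hPG _ hx', fun h0 =>
              Finset.disjoint_left.1 (hPd 0 (i + 1) (by omega)) h0 hx'⟩)
          (fun i j hij => (hPd (i + 1) (j + 1) (by omega)).mono
            Finset.sdiff_subset Finset.sdiff_subset)
          (fun i l => by
            have := hg1 i T hT l
            rwa [Finset.union_right_comm] at this)
        exact ⟨I, fun _ => hI'⟩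
      · exact ⟨fun _ => ∅, fun h => absurd h hT⟩
    choose J hJ using key
    refine ⟨fun A => (A ∩ P 0) ∪ J (A ∩ P 0) (A \ P 0), ?_, ?_, ?_⟩
    · intro A hA
      have h := (hJ (A ∩ P 0) Finset.inter_subset_right).1 (A \ P 0)
        (Finset.sdiff_subset_sdiff hA subset_rfl)
      refine ⟨Finset.union_subset Finset.inter_subset_left (h.1.trans Finset.sdiff_subset), ?_⟩
      intro x hx
      rcases Finset.mem_union.1 hx with hx | hx
      · exact ⟨0, (Finset.mem_inter.1 hx).2⟩
      · obtain ⟨i, hi⟩ := h.2 x hx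
        exact ⟨i + 1, (Finset.mem_sdiff.1 hi).1⟩
    · intro A hA l
      have h := (hJ (A ∩ P 0) Finset.inter_subset_right).2.1 (A \ P 0)
        (Finset.sdiff_subset_sdiff hA subset_rfl) l
      rwa [Finset.union_assoc] at h
    · intro i hi e he
      cases i with
      | zero =>
        have h := exOn_mem p G e (hPG 0 he)
        simp only [mul_zero, pow_zero, mul_one]
        refine h.symm.le.trans (exOn_mono hp0 hp1 G fun A hA => ?_)
        by_cases heA : e ∈ A
        · simp [heA, he]
        · simp only [heA, if_false]
          split_ifs <;> norm_num
      | succ i =>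
        have hGP : G = P 0 ∪ (G \ P 0) := (Finset.union_sdiff_of_subset (hPG 0)).symm
        have hcount : (1 - p) ^ k ≤ exOn p (P 0) (fun T => if e ∈ g i T then 0 else 1) := by
          refine le_trans ?_ (hg2 i e)
          exact pow_le_pow_of_le_one hq0 hq1 ((Finset.card_le_univ _).trans (by simp))
        calc p * (1 - p) ^ (k * (i + 1)) = (1 - p) ^ k * (p * (1 - p) ^ (k * i)) := by ring
          _ ≤ exOn p (P 0) (fun T => if e ∈ g i T then 0 else 1) * (p * (1 - p) ^ (k * i)) :=
              mul_le_mul_of_nonneg_right hcount (by positivity)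
          _ = exOn p (P 0) (fun T => (if e ∈ g i T then 0 else 1) * (p * (1 - p) ^ (k * i))) :=
              (exOn_mul_const _ _ _ _).symm
          _ ≤ exOn p (P 0) (fun T => exOn p (G \ P 0) (fun T' =>
                if e ∈ ((T ∪ T') ∩ P 0) ∪ J ((T ∪ T') ∩ P 0) ((T ∪ T') \ P 0)
                then 1 else 0)) := by
              refine exOn_mono hp0 hp1 _ fun T hT => ?_
              by_cases heg : e ∈ g i T
              · simp only [heg, if_true, zero_mul]
                refine (exOn_const p 0 (G \ P 0)).symm.le.trans (exOn_mono hp0 hp1 _ fun T' hT' => ?_)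
                split_ifs <;> norm_num
              · simp only [heg, if_false, one_mul]
                refine ((hJ T hT).2.2 i (by omega) e
                  (Finset.mem_sdiff.2 ⟨he, heg⟩)).trans
                  (exOn_mono hp0 hp1 _ fun T' hT' => ?_)
                have h1 : (T ∪ T') ∩ P 0 = T := by
                  ext x
                  have := @hT x
                  have := @hT' x
                  simp only [mem_inter, mem_union, mem_sdiff] at *
                  tauto
                have h2 : (T ∪ T') \ P 0 = T' := by
                  ext x
                  have := @hT x
                  have := @hT' x
                  simp only [mem_union, mem_sdiff] at *
                  tauto
                rw [h1, h2]
                by_cases hej : e ∈ J T T'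
                · simp [hej]
                · simp only [hej, if_false]
                  split_ifs <;> norm_num
          _ = exOn p G (fun A => if e ∈ (A ∩ P 0) ∪ J (A ∩ P 0) (A \ P 0) then 1 else 0) := by
              conv_rhs => rw [hGP]
              rw [exOn_union p (P 0) (G \ P 0) Finset.disjoint_sdiff]

theorem exOn_univ (p : ℝ) (f : Finset E → ℝ) :
    exOn p Finset.univ f = ∑ A : Finset E, prodWeight (fun _ => p) A * f A := by
  unfold exOn prodWeight
  rw [Finset.powerset_univ]
  refine Finset.sum_congr rfl fun A _ => ?_
  rw [Finset.prod_const, Finset.prod_const, Finset.compl_eq_univ_sdiff]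

/-- Existence of the augmented feasible solution `I*` for the
matroid-intersection sparsifier: `I*` is a deterministic function of the samples
`R_1, …, R_τ` (with `Q_i = OPTSOL(R_i)`) and the active set `R`, is always a common
independent set contained in `(Q_1 ∪ ⋯ ∪ Q_τ) ∩ R`, and for every element `e` and
index `i`, conditioned on `e ∈ Q_i ∖ (Q_1 ∪ ⋯ ∪ Q_{i-1})`, the element `e` belongs to
`I*` with probability at least `p (1−p)^{k(i−1)}`.  (Here `i : Fin τ` corresponds to the
`1`-indexed sample `i + 1`, so the exponent is `k · i`.) -/
theorem stmt_12 (k : ℕ) (hk : 0 < k) (M : Fin k → FinMatroid E)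
    (w : E → ℝ) (hw : ∀ e, 0 ≤ w e)
    (p : ℝ) (hp0 : 0 < p) (hp1 : p ≤ 1)
    (τ : ℕ) (hτ : 0 < τ)
    (OPTSOL : Finset E → Finset E)
    (hOmem : ∀ S, ∀ ℓ, (M ℓ).Indep (OPTSOL S))
    (hOsub : ∀ S, OPTSOL S ⊆ S)
    (hOmax : ∀ S, ∀ T ⊆ S, (∀ ℓ, (M ℓ).Indep T) →
      setWeight w T ≤ setWeight w (OPTSOL S)) :
    ∃ Istar : (Fin τ → Finset E) → Finset E → Finset E,
      (∀ Rs A, Istar Rs A ⊆ (Finset.univ.biUnion fun i => OPTSOL (Rs i)) ∩ A) ∧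
      (∀ Rs A, ∀ ℓ, (M ℓ).Indep (Istar Rs A)) ∧
      (∀ e : E, ∀ i : Fin τ,
        0 < (∑ Rs : Fin τ → Finset E, (∏ j, prodWeight (fun _ => p) (Rs j)) *
              (if e ∈ OPTSOL (Rs i) \
                  ((Finset.univ.filter fun j => j < i).biUnion fun j => OPTSOL (Rs j))
                then 1 else 0)) →
        (p * (1 - p) ^ (k * (i : ℕ))) *
            (∑ Rs : Fin τ → Finset E, (∏ j, prodWeight (fun _ => p) (Rs j)) *
              (if e ∈ OPTSOL (Rs i) \
                  ((Finset.univ.filter fun j => j < i).biUnion fun j => OPTSOL (Rs j))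
                then 1 else 0))
          ≤ ∑ Rs : Fin τ → Finset E, ∑ A : Finset E,
              ((∏ j, prodWeight (fun _ => p) (Rs j)) * prodWeight (fun _ => p) A) *
                (if e ∈ Istar Rs A ∧ e ∈ OPTSOL (Rs i) \
                    ((Finset.univ.filter fun j => j < i).biUnion fun j => OPTSOL (Rs j))
                  then 1 else 0)) := by
  have hq0 : 0 ≤ 1 - p := by linarith
  have hpw : ∀ A : Finset E, 0 ≤ prodWeight (fun _ => p) A := fun A =>
    mul_nonneg (Finset.prod_nonneg fun _ _ => hp0.le) (Finset.prod_nonneg fun _ _ => hq0)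
  have main : ∀ Rs : Fin τ → Finset E, ∃ I : Finset E → Finset E,
      (∀ A, I A ⊆ (Finset.univ.biUnion fun i => OPTSOL (Rs i)) ∩ A) ∧
      (∀ A, ∀ l, (M l).Indep (I A)) ∧
      ∀ i : Fin τ, ∀ e ∈ OPTSOL (Rs i) \
          ((Finset.univ.filter fun j => j < i).biUnion fun j => OPTSOL (Rs j)),
        p * (1 - p) ^ (k * (i : ℕ)) ≤
          ∑ A : Finset E, prodWeight (fun _ => p) A * (if e ∈ I A then 1 else 0) := by
    intro Rs
    obtain ⟨I, h1, h2, h3⟩ := multi M hp0.le hp1 τ Finset.univ ∅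
      (fun i => if h : i < τ then OPTSOL (Rs ⟨i, h⟩) \
          ((Finset.univ.filter fun j : Fin τ => j < ⟨i, h⟩).biUnion fun j => OPTSOL (Rs j)) else ∅)
      (by simp) (fun i => Finset.subset_univ _)
      (fun i j hij => by
        by_cases hj : j < τ
        · have hi : i < τ := by omega
          simp only [hi, hj, dif_pos]
          rw [Finset.disjoint_left]
          intro x hx hx'
          refine (Finset.mem_sdiff.1 hx').2 ?_
          rw [Finset.mem_biUnion]
          exact ⟨⟨i, hi⟩, by simpa using hij, (Finset.mem_sdiff.1 hx).1⟩
        · simp [hj])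
      (fun i l => by
        rw [Finset.empty_union]
        split_ifs with h
        · exact (M l).indep_subset (hOmem _ l) Finset.sdiff_subset
        · exact (M l).empty_indep)
    refine ⟨I, ?_, ?_, ?_⟩
    · intro A x hx
      have hA := h1 A (Finset.subset_univ A)
      refine Finset.mem_inter.2 ⟨?_, hA.1 hx⟩
      obtain ⟨i, hi⟩ := hA.2 x hx
      by_cases h : i < τ
      · simp only [h, dif_pos] at hi
        exact Finset.mem_biUnion.2 ⟨⟨i, h⟩, Finset.mem_univ _, (Finset.mem_sdiff.1 hi).1⟩
      · simp [h] at hi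
    · intro A l
      simpa using h2 A (Finset.subset_univ A) l
    · intro i e he
      have h := h3 i i.2 e (by simpa only [i.2, dif_pos, Fin.eta] using he)
      rw [exOn_univ] at h
      convert h
  choose Istar hs hi hb using main
  refine ⟨Istar, hs, hi, ?_⟩
  intro e i _
  rw [Finset.mul_sum]
  refine Finset.sum_le_sum fun Rs _ => ?_
  by_cases he : e ∈ OPTSOL (Rs i) \
      ((Finset.univ.filter fun j => j < i).biUnion fun j => OPTSOL (Rs j))
  · simp only [he, if_true, and_true, mul_one]
    have h := mul_le_mul_of_nonneg_left (hb Rs i e he)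
      (Finset.prod_nonneg fun j (_ : j ∈ Finset.univ) => hpw (Rs j))
    rw [Finset.mul_sum] at h
    simp only [← mul_assoc] at h ⊢
    linarith
  · simp [he]
end
end
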